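/- arXiv:2410.16750 — 6 statements merged into one kernel-verified Lean document; each statement's English description precedes it below -/
import Mathlib

section
/- Let d_z, d_x ≥ 1, m ∈ ℝ^{d_z}, let D be a d_z×d_z real symmetric positive definite matrix, let W be a real d_x×d_z matrix, b, x ∈ ℝ^{d_x}, and c > 0. Then ∫_{ℝ^{d_z}} det(2πD)^{-1/2} exp(−(1/2)(z−m)ᵀ D^{-1} (z−m)) · log( (2πc²)^{-d_x/2} exp(−‖x − Wz − b‖²/(2c²)) ) dz = (1/(2c²)) ( −tr(W D Wᵀ) − ‖W m + b − x‖² ) − (d_x/2) log(2πc²). -/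
open Real Matrix RealInnerProductSpace MeasureTheory

/-!
The first factor of the integrand is the density of `N(m, D)`: for the standard Gaussian this
follows by comparing characteristic functions, and in general by the affine change of variables
`u ↦ m + √D u`. The integral is therefore an expectation under `N(m, D)`. The log-density is affine
in `‖Wz - (x - b)‖²`, and `Wz` has law `N(Wm, W D Wᵀ)`, so the result follows from
`E ‖Y - a‖² = tr (Cov Y) + ‖E Y - a‖²`.
-/

open ProbabilityTheory Module
open scoped MatrixOrder ENNReal

section ChangeOfVariables

variable {α β : Type*} [MeasurableSpace α] [MeasurableSpace β]

lemma map_withDensity_comp (μ : Measure α) {T : α → β} (hT : Measurable T) {g : β → ℝ≥0∞}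
    (hg : Measurable g) :
    (μ.withDensity (g ∘ T)).map T = (μ.map T).withDensity g := by
  ext s hs
  rw [Measure.map_apply hT hs, withDensity_apply _ (hT hs), withDensity_apply _ hs,
    setLIntegral_map hs hg hT]
  rfl

variable {E : Type*} [NormedAddCommGroup E] [NormedSpace ℝ E] [FiniteDimensional ℝ E]
  [MeasurableSpace E] [BorelSpace E]

lemma map_const_add_continuousLinearMap_addHaar (μ : Measure E) [μ.IsAddHaarMeasure] (a : E)
    {f : E →L[ℝ] E} (hf : f.det ≠ 0) :
    μ.map (fun x ↦ a + f x) = ENNReal.ofReal |f.det⁻¹| • μ := by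
  calc μ.map (fun x ↦ a + f x) = (μ.map (f : E →ₗ[ℝ] E)).map (a + ·) :=
        (Measure.map_map (measurable_const_add a) f.continuous.measurable).symm
    _ = ENNReal.ofReal |f.det⁻¹| • μ := by
        rw [Measure.map_linearMap_addHaar_eq_smul_addHaar μ hf, Measure.map_smul,
          map_add_left_eq_self]

end ChangeOfVariables

section StdGaussian

variable {E : Type*} [NormedAddCommGroup E] [InnerProductSpace ℝ E]

/-- Lebesgue density of the standard Gaussian measure on a finite-dimensional inner product
space. -/
noncomputable def stdGaussianPDFReal (x : E) : ℝ :=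
  (2 * π) ^ (-(finrank ℝ E : ℝ) / 2) * exp (-(1 / 2) * ‖x‖ ^ 2)

lemma stdGaussianPDFReal_nonneg (x : E) : 0 ≤ stdGaussianPDFReal x := by
  unfold stdGaussianPDFReal
  positivity

variable [MeasurableSpace E]

lemma charFun_withDensity_ofReal {μ : Measure E} {g : E → ℝ} (hg : Measurable g)
    (hg0 : ∀ x, 0 ≤ g x) (t : E) :
    charFun (μ.withDensity fun x ↦ ENNReal.ofReal (g x)) t =
      ∫ x, (g x : ℂ) * Complex.exp (⟪x, t⟫ * Complex.I) ∂μ := by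
  rw [charFun_apply, integral_withDensity_eq_integral_toReal_smul (by fun_prop)
    (ae_of_all _ fun _ ↦ ENNReal.ofReal_lt_top)]
  simp only [ENNReal.toReal_ofReal (hg0 _), Complex.real_smul]

variable [BorelSpace E]

lemma measurable_stdGaussianPDFReal : Measurable (stdGaussianPDFReal (E := E)) := by
  unfold stdGaussianPDFReal
  fun_prop

variable [FiniteDimensional ℝ E]

lemma integrable_stdGaussianPDFReal : Integrable (stdGaussianPDFReal (E := E)) := by
  have h : Integrable fun x : E ↦ Complex.exp (-(1 / 2 : ℂ) * ‖x‖ ^ 2) := by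
    simpa using GaussianFourier.integrable_cexp_neg_mul_sq_norm_add (V := E)
      (b := 1 / 2) (by norm_num) 0 0
  refine Integrable.const_mul (h.re.congr (ae_of_all _ fun x ↦ ?_)) _
  have harg : -(1 / 2 : ℂ) * ‖x‖ ^ 2 = ((-(1 / 2) * ‖x‖ ^ 2 : ℝ) : ℂ) := by push_cast; rfl
  change RCLike.re (Complex.exp (-(1 / 2 : ℂ) * ‖x‖ ^ 2)) = _
  rw [harg]
  exact Complex.exp_ofReal_re _

theorem stdGaussian_eq_withDensity :
    stdGaussian E = volume.withDensity fun x ↦ ENNReal.ofReal (stdGaussianPDFReal x) := by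
  have : IsFiniteMeasure (volume.withDensity fun x : E ↦ ENNReal.ofReal (stdGaussianPDFReal x)) :=
    isFiniteMeasure_withDensity_ofReal integrable_stdGaussianPDFReal.2
  refine Measure.ext_of_charFun (funext fun t ↦ ?_)
  have hconst : (((2 * π) ^ (-(finrank ℝ E : ℝ) / 2) : ℝ) : ℂ) *
      (π / (1 / 2 : ℂ)) ^ (finrank ℝ E / 2 : ℂ) = 1 := by
    have h : (π / (1 / 2 : ℂ)) ^ (finrank ℝ E / 2 : ℂ) =
        (((2 * π) ^ ((finrank ℝ E : ℝ) / 2) : ℝ) : ℂ) := by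
      rw [Complex.ofReal_cpow (by positivity)]
      push_cast
      ring_nf
    rw [h, ← Complex.ofReal_mul, ← rpow_add (by positivity)]
    simp [neg_div]
  symm
  calc charFun (volume.withDensity fun x ↦ ENNReal.ofReal (stdGaussianPDFReal x)) t
      = ∫ x : E, (((2 * π) ^ (-(finrank ℝ E : ℝ) / 2) : ℝ) : ℂ) *
          Complex.exp (-(1 / 2 : ℂ) * ‖x‖ ^ 2 + Complex.I * ⟪t, x⟫) := by
        rw [charFun_withDensity_ofReal measurable_stdGaussianPDFReal stdGaussianPDFReal_nonneg]
        refine integral_congr_ae (ae_of_all _ fun x ↦ ?_)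
        simp only [stdGaussianPDFReal, Complex.exp_add, real_inner_comm t x]
        push_cast
        ring_nf
    _ = Complex.exp (-‖t‖ ^ 2 / 2) := by
        rw [integral_const_mul,
          GaussianFourier.integral_cexp_neg_mul_sq_norm_add (by norm_num), ← mul_assoc, hconst,
          one_mul, Complex.I_sq]
        ring_nf
    _ = charFun (stdGaussian E) t := (charFun_stdGaussian t).symm

end StdGaussian

section SecondMoment

variable {Ω : Type*} [MeasurableSpace Ω] {P : Measure Ω} [IsProbabilityMeasure P]

lemma integral_sub_const_sq {X : Ω → ℝ} (hX : MemLp X 2 P) (a : ℝ) :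
    ∫ ω, (X ω - a) ^ 2 ∂P = Var[X; P] + (P[X] - a) ^ 2 := by
  have hmean : ∫ ω, (X ω - a) ∂P = P[X] - a := by
    rw [integral_sub (hX.integrable one_le_two) (integrable_const a)]
    simp
  have hvar : Var[fun ω ↦ X ω - a; P] = Var[X; P] := variance_sub_const hX.aestronglyMeasurable a
  have h : Var[fun ω ↦ X ω - a; P] = ∫ ω, (X ω - a) ^ 2 ∂P - (∫ ω, (X ω - a) ∂P) ^ 2 :=
    variance_eq_sub (hX.sub (memLp_const a))
  rw [hmean, hvar] at h
  exact eq_add_of_sub_eq h.symm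

lemma integral_norm_sub_sq {ι : Type*} [Fintype ι] {X : Ω → EuclideanSpace ℝ ι} (hX : MemLp X 2 P)
    (a : EuclideanSpace ℝ ι) :
    ∫ ω, ‖X ω - a‖ ^ 2 ∂P = ∑ i, Var[fun ω ↦ X ω i; P] + ‖P[X] - a‖ ^ 2 := by
  have hXi (i : ι) : MemLp (fun ω ↦ X ω i) 2 P := (EuclideanSpace.proj (𝕜 := ℝ) i).comp_memLp' hX
  have hint (i : ι) : Integrable (fun ω ↦ (X ω i - a i) ^ 2) P :=
    ((hXi i).sub (memLp_const (a i))).integrable_sq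
  have hmean (i : ι) : P[X] i = ∫ ω, X ω i ∂P :=
    ((EuclideanSpace.proj (𝕜 := ℝ) i).integral_comp_comm (hX.integrable one_le_two)).symm
  simp only [EuclideanSpace.real_norm_sq_eq, PiLp.sub_apply, hmean]
  rw [integral_finsetSum _ fun i _ ↦ hint i]
  simp only [integral_sub_const_sq (hXi _), Finset.sum_add_distrib]

end SecondMoment

section MultivariateGaussian

variable {ι κ : Type*} [Fintype ι] {S : Matrix ι ι ℝ}

lemma posSemidef_mul_mul_transpose_same [Finite κ] (hS : S.PosSemidef) (W : Matrix κ ι ℝ) :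
    (W * S * Wᵀ).PosSemidef :=
  conjTranspose_eq_transpose_of_trivial W ▸ hS.mul_mul_conjTranspose_same W

variable [DecidableEq ι] [Fintype κ]

/-- Lebesgue density of the Gaussian measure with mean `μ` and covariance matrix `S`. It is written
with the junk-valued inverse `S⁻¹`, so it has this meaning only when `S` is positive definite. -/
noncomputable def multivariateGaussianPDFReal (μ : EuclideanSpace ℝ ι) (S : Matrix ι ι ℝ)
    (z : EuclideanSpace ℝ ι) : ℝ :=
  (det ((2 * π) • S)) ^ (-(1 / 2) : ℝ) * exp (-(1 / 2) * ⟪z - μ, toEuclideanLin S⁻¹ (z - μ)⟫)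

lemma measurable_multivariateGaussianPDFReal (μ : EuclideanSpace ℝ ι) (S : Matrix ι ι ℝ) :
    Measurable (multivariateGaussianPDFReal μ S) := by
  have : Continuous (toEuclideanLin S⁻¹) := LinearMap.continuous_of_finiteDimensional _
  unfold multivariateGaussianPDFReal
  fun_prop

lemma multivariateGaussianPDFReal_nonneg (μ : EuclideanSpace ℝ ι) (hS : S.PosSemidef)
    (z : EuclideanSpace ℝ ι) : 0 ≤ multivariateGaussianPDFReal μ S z := by
  have : 0 ≤ det ((2 * π) • S) := (hS.smul (by positivity)).det_nonneg
  unfold multivariateGaussianPDFReal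
  positivity

lemma inner_sqrt_apply_inv_sqrt_apply (hS : S.PosDef) (u : EuclideanSpace ℝ ι) :
    ⟪toEuclideanCLM (𝕜 := ℝ) (CFC.sqrt S) u,
      toEuclideanLin S⁻¹ (toEuclideanCLM (𝕜 := ℝ) (CFC.sqrt S) u)⟫ = ‖u‖ ^ 2 := by
  have hunit : IsUnit (CFC.sqrt S).det :=
    (isUnit_iff_isUnit_det _).mp ((CFC.isUnit_sqrt_iff S hS.posSemidef.nonneg).mpr hS.isUnit)
  have hself : IsSelfAdjoint (toEuclideanCLM (𝕜 := ℝ) (CFC.sqrt S)) :=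
    (CFC.sqrt_nonneg S).isSelfAdjoint.map _
  have hcancel : CFC.sqrt S * S⁻¹ * CFC.sqrt S = 1 := by
    nth_rw 2 [← CFC.sqrt_mul_sqrt_self S hS.posSemidef.nonneg]
    rw [Matrix.mul_inv_rev, mul_nonsing_inv_cancel_left _ _ hunit, nonsing_inv_mul _ hunit]
  calc _ = ⟪u, toEuclideanCLM (𝕜 := ℝ) (CFC.sqrt S * S⁻¹ * CFC.sqrt S) u⟫ := by
        rw [← ContinuousLinearMap.adjoint_inner_right, hself.adjoint_eq, map_mul, map_mul]
        rfl
    _ = ‖u‖ ^ 2 := by rw [hcancel, map_one, one_apply_eq_self, real_inner_self_eq_norm_sq]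

lemma rpow_det_two_pi_smul (hS : S.PosSemidef) :
    ((2 * π) • S).det ^ (-(1 / 2) : ℝ) =
      (2 * π) ^ (-(Fintype.card ι : ℝ) / 2) * (CFC.sqrt S).det⁻¹ := by
  rw [det_smul, mul_rpow (by positivity) hS.det_nonneg, ← rpow_natCast, ← rpow_mul (by positivity),
    hS.det_sqrt, RCLike.sqrt_of_nonneg hS.det_nonneg, rpow_neg hS.det_nonneg, ← sqrt_eq_rpow]
  congr 2
  ring

lemma det_sqrt_pos (hS : S.PosDef) : 0 < (CFC.sqrt S).det := by
  rw [hS.posSemidef.det_sqrt, RCLike.sqrt_of_nonneg hS.det_pos.le]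
  exact sqrt_pos.mpr hS.det_pos

lemma stdGaussianPDFReal_eq_det_sqrt_mul (μ : EuclideanSpace ℝ ι) (hS : S.PosDef)
    (u : EuclideanSpace ℝ ι) :
    stdGaussianPDFReal u = (CFC.sqrt S).det *
      multivariateGaussianPDFReal μ S (μ + toEuclideanCLM (𝕜 := ℝ) (CFC.sqrt S) u) := by
  have := (det_sqrt_pos hS).ne'
  simp only [stdGaussianPDFReal, multivariateGaussianPDFReal]
  rw [add_sub_cancel_left, inner_sqrt_apply_inv_sqrt_apply hS,
    rpow_det_two_pi_smul hS.posSemidef, finrank_euclideanSpace]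
  field_simp

theorem multivariateGaussian_eq_withDensity (μ : EuclideanSpace ℝ ι) (hS : S.PosDef) :
    multivariateGaussian μ S =
      volume.withDensity fun z ↦ ENNReal.ofReal (multivariateGaussianPDFReal μ S z) := by
  set A := toEuclideanCLM (n := ι) (𝕜 := ℝ) (CFC.sqrt S)
  have hA : A.det = (CFC.sqrt S).det := LinearMap.det_toLpLin 2 (CFC.sqrt S)
  have hpos : 0 < A.det := hA ▸ det_sqrt_pos hS
  have hmeas : Measurable fun z ↦ ENNReal.ofReal (multivariateGaussianPDFReal μ S z) :=
    (measurable_multivariateGaussianPDFReal μ S).ennreal_ofReal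
  have hstd : stdGaussian (EuclideanSpace ℝ ι) = ENNReal.ofReal A.det • volume.withDensity
      ((fun z ↦ ENNReal.ofReal (multivariateGaussianPDFReal μ S z)) ∘ fun u ↦ μ + A u) := by
    rw [stdGaussian_eq_withDensity, ← withDensity_smul _ (hmeas.comp (by fun_prop))]
    congr with u
    rw [stdGaussianPDFReal_eq_det_sqrt_mul μ hS u, ← hA, ENNReal.ofReal_mul hpos.le]
    rfl
  rw [multivariateGaussian, hstd, Measure.map_smul, map_withDensity_comp _ (by fun_prop) hmeas,
    map_const_add_continuousLinearMap_addHaar _ _ hpos.ne', withDensity_smul_measure, smul_smul,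
    ← ENNReal.ofReal_mul hpos.le, abs_of_pos (inv_pos.mpr hpos), mul_inv_cancel₀ hpos.ne',
    ENNReal.ofReal_one, one_smul]

theorem integral_multivariateGaussian_eq_integral_smul {F : Type*} [NormedAddCommGroup F]
    [NormedSpace ℝ F] (μ : EuclideanSpace ℝ ι) (hS : S.PosDef) (f : EuclideanSpace ℝ ι → F) :
    ∫ z, f z ∂(multivariateGaussian μ S) = ∫ z, multivariateGaussianPDFReal μ S z • f z := by
  rw [multivariateGaussian_eq_withDensity μ hS, integral_withDensity_eq_integral_toReal_smul
    (measurable_multivariateGaussianPDFReal μ S).ennreal_ofReal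
    (ae_of_all _ fun _ ↦ ENNReal.ofReal_lt_top)]
  simp only [ENNReal.toReal_ofReal (multivariateGaussianPDFReal_nonneg μ hS.posSemidef _)]

lemma integrable_norm_toEuclideanLin_sub_sq_multivariateGaussian (μ : EuclideanSpace ℝ ι)
    (S : Matrix ι ι ℝ) (W : Matrix κ ι ℝ) (a : EuclideanSpace ℝ κ) :
    Integrable (fun z ↦ ‖toEuclideanLin W z - a‖ ^ 2) (multivariateGaussian μ S) := by
  have hW : MemLp (toEuclideanLin W) 2 (multivariateGaussian μ S) :=
    (LinearMap.toContinuousLinearMap (toEuclideanLin W)).comp_memLp' IsGaussian.memLp_two_id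
  exact (hW.sub (memLp_const a)).integrable_norm_pow two_ne_zero

theorem map_toEuclideanLin_multivariateGaussian [DecidableEq κ] (μ : EuclideanSpace ℝ ι)
    (hS : S.PosSemidef) (W : Matrix κ ι ℝ) :
    (multivariateGaussian μ S).map (toEuclideanLin W) =
      multivariateGaussian (toEuclideanLin W μ) (W * S * Wᵀ) := by
  set L : EuclideanSpace ℝ ι →L[ℝ] EuclideanSpace ℝ κ :=
    LinearMap.toContinuousLinearMap (toEuclideanLin W)
  have hL (u : EuclideanSpace ℝ κ) : L.adjoint u = toEuclideanLin Wᵀ u := by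
    rw [← conjTranspose_eq_transpose_of_trivial, toEuclideanLin_conjTranspose_eq_adjoint]
    rfl
  change (multivariateGaussian μ S).map L = _
  refine IsGaussian.ext ?_ ?_
  · simp only [id_eq]
    rw [L.integral_id_map IsGaussian.integrable_id, integral_id_multivariateGaussian,
      integral_id_multivariateGaussian]
    rfl
  · ext u v
    rw [covarianceBilin_map IsGaussian.memLp_two_id, covarianceBilin_multivariateGaussian hS,
      covarianceBilin_multivariateGaussian (posSemidef_mul_mul_transpose_same hS W), hL, hL]
    simp only [ofLp_toLpLin, toLin'_apply, ← mulVec_mulVec, mulVec_transpose, dotProduct_mulVec]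

theorem integral_norm_sub_sq_multivariateGaussian (μ a : EuclideanSpace ℝ ι) (hS : S.PosSemidef) :
    ∫ z, ‖z - a‖ ^ 2 ∂(multivariateGaussian μ S) = S.trace + ‖μ - a‖ ^ 2 := by
  have h := integral_norm_sub_sq (IsGaussian.memLp_two_id (μ := multivariateGaussian μ S)) a
  simp only [id_eq, integral_id_multivariateGaussian, variance_eval_multivariateGaussian hS] at h
  exact h

theorem integral_norm_toEuclideanLin_sub_sq_multivariateGaussian (μ : EuclideanSpace ℝ ι)
    (hS : S.PosSemidef) (W : Matrix κ ι ℝ) (a : EuclideanSpace ℝ κ) :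
    ∫ z, ‖toEuclideanLin W z - a‖ ^ 2 ∂(multivariateGaussian μ S) =
      (W * S * Wᵀ).trace + ‖toEuclideanLin W μ - a‖ ^ 2 := by
  classical
  have hW : Continuous (toEuclideanLin W) := LinearMap.continuous_of_finiteDimensional _
  rw [← integral_norm_sub_sq_multivariateGaussian _ _ (posSemidef_mul_mul_transpose_same hS W),
    ← map_toEuclideanLin_multivariateGaussian μ hS,
    integral_map hW.measurable.aemeasurable (by fun_prop)]

end MultivariateGaussian

lemma log_rpow_mul_exp {a : ℝ} (ha : 0 < a) (r t : ℝ) : log (a ^ r * exp t) = r * log a + t := by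
  rw [log_mul (rpow_pos_of_pos ha r).ne' (exp_ne_zero t), log_rpow ha, log_exp]

/-- Reconstruction term of the Linear Gaussian VAE: the expectation under the Gaussian
`N(m, D)` of the log-density of `N(Wz + b, c² I)` evaluated at `x`. -/
theorem stmt_4
    {dx dz : ℕ} (hdx : 1 ≤ dx) (hdz : 1 ≤ dz)
    (m : EuclideanSpace ℝ (Fin dz)) (D : Matrix (Fin dz) (Fin dz) ℝ) (hD : D.PosDef)
    (W : Matrix (Fin dx) (Fin dz) ℝ) (b x : EuclideanSpace ℝ (Fin dx)) (c : ℝ) (hc : 0 < c) :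
    ∫ z : EuclideanSpace ℝ (Fin dz),
        (Matrix.det ((2 * π) • D)) ^ (-(1 / 2) : ℝ) *
          Real.exp (-(1 / 2) * ⟪z - m, Matrix.toEuclideanLin D⁻¹ (z - m)⟫) *
          Real.log ((2 * π * c ^ 2) ^ (-(dx : ℝ) / 2) *
            Real.exp (-‖x - Matrix.toEuclideanLin W z - b‖ ^ 2 / (2 * c ^ 2))) =
      (1 / (2 * c ^ 2)) * (-(W * D * Wᵀ).trace -
          ‖Matrix.toEuclideanLin W m + b - x‖ ^ 2) -
        ((dx : ℝ) / 2) * Real.log (2 * π * c ^ 2) := by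
  have hres (z) : ‖x - toEuclideanLin W z - b‖ = ‖toEuclideanLin W z - (x - b)‖ := by
    rw [norm_sub_rev, sub_sub_eq_add_sub, sub_sub_eq_add_sub, add_comm]
  calc _ = ∫ z, log ((2 * π * c ^ 2) ^ (-(dx : ℝ) / 2) *
            exp (-‖x - toEuclideanLin W z - b‖ ^ 2 / (2 * c ^ 2))) ∂multivariateGaussian m D :=
        (integral_multivariateGaussian_eq_integral_smul m hD _).symm
    _ = ∫ z, (-(dx : ℝ) / 2 * log (2 * π * c ^ 2) -
            1 / (2 * c ^ 2) * ‖toEuclideanLin W z - (x - b)‖ ^ 2) ∂multivariateGaussian m D := by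
        congr with z
        rw [log_rpow_mul_exp (by positivity), hres]
        ring
    _ = -(dx : ℝ) / 2 * log (2 * π * c ^ 2) -
          1 / (2 * c ^ 2) * ((W * D * Wᵀ).trace + ‖toEuclideanLin W m - (x - b)‖ ^ 2) := by
        rw [integral_sub (integrable_const _)
            ((integrable_norm_toEuclideanLin_sub_sq_multivariateGaussian m D W _).const_mul _),
          integral_const_mul (1 / (2 * c ^ 2)),
          integral_norm_toEuclideanLin_sub_sq_multivariateGaussian m hD.posSemidef]
        simp only [integral_const, probReal_univ, one_smul]
    _ = _ := by
        rw [sub_sub_eq_add_sub]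
        ring
end

section
/- Let (Z, 𝒵, λ) be a measure space, let p, q : Z → ℝ be measurable functions that are strictly positive λ-a.e., and let M : Z → ℝ be measurable with M ≥ 0. Then ∫ M(z) |p(z) − q(z)| dλ(z) ≤ ∫ M(z) |log p(z) − log q(z)| p(z) dλ(z) + ∫ M(z) |log p(z) − log q(z)| q(z) dλ(z), where all integrals are taken in [0, ∞]. -/
open MeasureTheory

/-!
For `0 < b ≤ a`, multiplying `x - 1 ≤ x log x` at `x = a / b` by `b` gives
`a - b ≤ (log a - log b) a`, so `|a - b| ≤ |log a - log b| max(a, b)` for all positive `a` and `b`.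
Bounding the maximum by the sum leaves one integral to split in two, and this is additivity of the
integral in the measure: `∫ f p dλ + ∫ f q dλ` is the integral of `f` against the sum of the
measures `p λ` and `q λ`.
-/

section Logarithm

variable {a b : ℝ}

lemma sub_le_log_sub_log_mul (ha : 0 < a) (hb : 0 < b) :
    a - b ≤ (Real.log a - Real.log b) * a :=
  calc
    a - b = (a / b - 1) * b := by field_simp
    _ ≤ a / b * Real.log (a / b) * b := by
      gcongr
      exact Real.self_sub_one_le_mul_log (div_pos ha hb).le
    _ = (Real.log a - Real.log b) * a := by
      rw [Real.log_div ha.ne' hb.ne']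
      field_simp

lemma abs_sub_le_abs_log_sub_log_mul_max (ha : 0 < a) (hb : 0 < b) :
    |a - b| ≤ |Real.log a - Real.log b| * max a b := by
  wlog hba : b ≤ a generalizing a b
  · simpa only [abs_sub_comm, max_comm] using this hb ha (le_of_not_ge hba)
  rw [abs_of_nonneg (sub_nonneg.2 hba), max_eq_left hba]
  calc
    a - b ≤ (Real.log a - Real.log b) * a := sub_le_log_sub_log_mul ha hb
    _ ≤ |Real.log a - Real.log b| * a := by gcongr; exact le_abs_self _

lemma ofReal_abs_sub_le_mul_add (ha : 0 < a) (hb : 0 < b) :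
    ENNReal.ofReal |a - b| ≤
      ENNReal.ofReal |Real.log a - Real.log b| * (ENNReal.ofReal a + ENNReal.ofReal b) := by
  rw [← ENNReal.ofReal_add ha.le hb.le, ← ENNReal.ofReal_mul (abs_nonneg _)]
  apply ENNReal.ofReal_le_ofReal
  calc
    |a - b| ≤ |Real.log a - Real.log b| * max a b := abs_sub_le_abs_log_sub_log_mul_max ha hb
    _ ≤ |Real.log a - Real.log b| * (a + b) := by
      gcongr
      exact max_le_add_of_nonneg ha.le hb.le

end Logarithm

section Lintegral

open scoped ENNReal

variable {Z : Type*} [MeasurableSpace Z] {μ : Measure Z}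

lemma withDensity_add_left₀ {u : Z → ℝ≥0∞} (hu : AEMeasurable u μ) (v : Z → ℝ≥0∞) :
    μ.withDensity (u + v) = μ.withDensity u + μ.withDensity v := by
  ext s hs
  simp only [Measure.add_apply, withDensity_apply _ hs, Pi.add_apply]
  exact lintegral_add_left' hu.restrict v

lemma lintegral_mul_add_of_aemeasurable (f : Z → ℝ≥0∞) {u v : Z → ℝ≥0∞}
    (hu : AEMeasurable u μ) (hv : AEMeasurable v μ)
    (hu_fin : ∀ᵐ z ∂μ, u z < ∞) (hv_fin : ∀ᵐ z ∂μ, v z < ∞) :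
    ∫⁻ z, f z * (u z + v z) ∂μ = ∫⁻ z, f z * u z ∂μ + ∫⁻ z, f z * v z ∂μ := by
  have huv_fin : ∀ᵐ z ∂μ, (u + v) z < ∞ := by
    filter_upwards [hu_fin, hv_fin] with z hz hz' using ENNReal.add_lt_top.2 ⟨hz, hz'⟩
  have lintegral_mul_eq {w : Z → ℝ≥0∞} (hw : AEMeasurable w μ) (hw_fin : ∀ᵐ z ∂μ, w z < ∞) :
      ∫⁻ z, f z * w z ∂μ = ∫⁻ z, f z ∂μ.withDensity w := by
    simp only [lintegral_withDensity_eq_lintegral_mul_non_measurable₀ μ hw hw_fin, Pi.mul_apply,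
      mul_comm]
  calc
    ∫⁻ z, f z * (u z + v z) ∂μ = ∫⁻ z, f z ∂μ.withDensity (u + v) :=
      lintegral_mul_eq (hu.add hv) huv_fin
    _ = ∫⁻ z, f z ∂μ.withDensity u + ∫⁻ z, f z ∂μ.withDensity v := by
      rw [withDensity_add_left₀ hu, lintegral_add_measure]
    _ = ∫⁻ z, f z * u z ∂μ + ∫⁻ z, f z * v z ∂μ := by
      rw [lintegral_mul_eq hu hu_fin, lintegral_mul_eq hv hv_fin]

theorem stmt_6_general (M : Z → ℝ≥0∞) {p q : Z → ℝ}
    (hp : AEMeasurable p μ) (hq : AEMeasurable q μ)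
    (hp_pos : ∀ᵐ z ∂μ, 0 < p z) (hq_pos : ∀ᵐ z ∂μ, 0 < q z) :
    ∫⁻ z, M z * ENNReal.ofReal |p z - q z| ∂μ ≤
      ∫⁻ z, M z * ENNReal.ofReal |Real.log (p z) - Real.log (q z)| * ENNReal.ofReal (p z) ∂μ +
      ∫⁻ z, M z * ENNReal.ofReal |Real.log (p z) - Real.log (q z)| * ENNReal.ofReal (q z) ∂μ := by
  rw [← lintegral_mul_add_of_aemeasurable _ hp.ennreal_ofReal hq.ennreal_ofReal
    (.of_forall fun _ ↦ ENNReal.ofReal_lt_top) (.of_forall fun _ ↦ ENNReal.ofReal_lt_top)]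
  apply lintegral_mono_ae
  filter_upwards [hp_pos, hq_pos] with z hpz hqz
  rw [mul_assoc]
  gcongr
  exact ofReal_abs_sub_le_mul_add hpz hqz

end Lintegral

/-- Weighted total-variation-type bound: for a.e.-positive densities `p, q` and a
nonnegative weight `M`, `∫ M |p − q| ≤ ∫ M |log p − log q| p + ∫ M |log p − log q| q`
(all integrals in `[0, ∞]`). -/
theorem stmt_6
    {Z : Type*} [MeasurableSpace Z] (lam : Measure Z)
    (p q M : Z → ℝ) (hp : Measurable p) (hq : Measurable q) (hM : Measurable M)
    (hMpos : ∀ z, 0 ≤ M z)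
    (hppos : ∀ᵐ z ∂lam, 0 < p z) (hqpos : ∀ᵐ z ∂lam, 0 < q z) :
    ∫⁻ z, ENNReal.ofReal (M z * |p z - q z|) ∂lam ≤
      ∫⁻ z, ENNReal.ofReal (M z * |Real.log (p z) - Real.log (q z)| * p z) ∂lam +
      ∫⁻ z, ENNReal.ofReal (M z * |Real.log (p z) - Real.log (q z)| * q z) ∂lam := by
  simpa only [ENNReal.ofReal_mul, hMpos, abs_nonneg, mul_nonneg] using
    stmt_6_general (fun z ↦ ENNReal.ofReal (M z)) hp.aemeasurable hq.aemeasurable hppos hqpos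
end

section
/- Let K ≥ 1 be an integer, let Θ be a subset of a normed vector space, and let w₁, …, w_K : Θ → ℝ be functions for which there exist constants 0 < α₋ ≤ α₊ and M ≥ 0 such that for every ℓ ∈ {1, …, K} and all θ, θ' ∈ Θ: α₋ ≤ w_ℓ(θ) ≤ α₊ and |w_ℓ(θ) − w_ℓ(θ')| ≤ α₊ M ‖θ − θ'‖. Define the normalized importance weights w̃_ℓ(θ) = w_ℓ(θ) / ∑_{j=1}^{K} w_j(θ). Then for every ℓ and all θ, θ' ∈ Θ: |w̃_ℓ(θ) − w̃_ℓ(θ')| ≤ (1/K) (α₊/α₋) M ‖θ − θ'‖ + (2/K) (α₊/α₋)³ M ‖θ − θ'‖. -/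
open Finset

/-!
With `S` and `T` the two normalizing sums, `a / S - b / T = ((a - b) - (b / T) * (S - T)) / S`.
Each sum is at least `K` times the lower bound on the weights, and `|S - T|` is at most `K` times
the largest variation of a single weight. The factor `K` in the bound on `|S - T|` is cancelled by
the `1 / K` decay of the normalized weight `b / T`, so dividing by `S` leaves a bound of
order `1 / K`.
-/

section PairOfWeightVectors

variable {𝕜 ι : Type*} [Field 𝕜] [LinearOrder 𝕜] [IsStrictOrderedRing 𝕜]
  {s : Finset ι} {u v : ι → 𝕜} {i : ι} {lower upper δ : 𝕜}

theorem abs_div_sub_div_le {a b S T : 𝕜} (hS : S ≠ 0) (hT : T ≠ 0) :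
    |a / S - b / T| ≤ (|a - b| + |b / T| * |S - T|) / |S| := by
  have key : a / S - b / T = ((a - b) - b / T * (S - T)) / S := by
    field_simp
    ring
  rw [key, abs_div, ← abs_mul]
  gcongr
  exact abs_sub _ _

theorem abs_sum_sub_sum_le_card_mul (h : ∀ j ∈ s, |u j - v j| ≤ δ) :
    |∑ j ∈ s, u j - ∑ j ∈ s, v j| ≤ #s * δ := by
  rw [← sum_sub_distrib, ← nsmul_eq_mul]
  exact (abs_sum_le_sum_abs _ _).trans (sum_le_card_nsmul _ _ _ h)

theorem card_mul_le_sum (h : ∀ j ∈ s, lower ≤ u j) : #s * lower ≤ ∑ j ∈ s, u j := by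
  simpa only [nsmul_eq_mul] using card_nsmul_le_sum s u lower h

theorem abs_div_sum_le (hlower : 0 < lower) (hi : i ∈ s) (hu : ∀ j ∈ s, lower ≤ u j)
    (hui : u i ≤ upper) : |u i / ∑ j ∈ s, u j| ≤ upper / (#s * lower) := by
  have hcard : (0 : 𝕜) < #s := mod_cast card_pos.2 ⟨i, hi⟩
  have hui_pos : 0 < u i := hlower.trans_le (hu i hi)
  have hsum : #s * lower ≤ ∑ j ∈ s, u j := card_mul_le_sum hu
  rw [abs_of_nonneg (by positivity [(mul_pos hcard hlower).trans_le hsum])]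
  exact div_le_div₀ (hui_pos.le.trans hui) hui (by positivity) hsum

theorem abs_div_sum_sub_div_sum_le (hlower : 0 < lower) (hi : i ∈ s)
    (hu : ∀ j ∈ s, lower ≤ u j) (hv : ∀ j ∈ s, lower ≤ v j) (hvi : v i ≤ upper)
    (hδ : ∀ j ∈ s, |u j - v j| ≤ δ) :
    |u i / ∑ j ∈ s, u j - v i / ∑ j ∈ s, v j| ≤ 1 / #s * (1 + upper / lower) * (δ / lower) := by
  have hcard : (0 : 𝕜) < #s := mod_cast card_pos.2 ⟨i, hi⟩
  have hmin : 0 < #s * lower := mul_pos hcard hlower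
  have hS : #s * lower ≤ ∑ j ∈ s, u j := card_mul_le_sum hu
  have hT : #s * lower ≤ ∑ j ∈ s, v j := card_mul_le_sum hv
  have hδ_nonneg : 0 ≤ δ := (abs_nonneg _).trans (hδ i hi)
  have hupper : 0 ≤ upper := hlower.le.trans ((hv i hi).trans hvi)
  calc
    _ ≤ (|u i - v i| + |v i / ∑ j ∈ s, v j| * |∑ j ∈ s, u j - ∑ j ∈ s, v j|)
          / |∑ j ∈ s, u j| :=
      abs_div_sub_div_le (hmin.trans_le hS).ne' (hmin.trans_le hT).ne'
    _ ≤ (δ + upper / (#s * lower) * (#s * δ)) / (#s * lower) := by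
      gcongr
      · exact hδ i hi
      · exact abs_div_sum_le hlower hi hv hvi
      · exact abs_sum_sub_sum_le_card_mul hδ
      · exact hS.trans (le_abs_self _)
    _ = 1 / #s * (1 + upper / lower) * (δ / lower) := by
      field_simp

end PairOfWeightVectors

theorem stmt_7_general {E ι : Type*} [PseudoMetricSpace E] {s : Finset ι} {Θ : Set E}
    {w : ι → E → ℝ} {i : ι} {αm αp L : ℝ} (hαm : 0 < αm) (hi : i ∈ s)
    (hlower : ∀ j ∈ s, ∀ θ ∈ Θ, αm ≤ w j θ) (hupper : ∀ θ ∈ Θ, w i θ ≤ αp)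
    (hlip : ∀ j ∈ s, ∀ θ ∈ Θ, ∀ θ' ∈ Θ, |w j θ - w j θ'| ≤ L * dist θ θ') :
    ∀ θ ∈ Θ, ∀ θ' ∈ Θ, |w i θ / (∑ j ∈ s, w j θ) - w i θ' / (∑ j ∈ s, w j θ')| ≤
      1 / #s * (1 + αp / αm) * (L / αm) * dist θ θ' := by
  intro θ hθ θ' hθ'
  rw [mul_assoc _ (L / αm), div_mul_eq_mul_div L]
  exact abs_div_sum_sub_div_sum_le hαm hi (fun j hj ↦ hlower j hj θ hθ)
    (fun j hj ↦ hlower j hj θ' hθ') (hupper θ' hθ') (fun j hj ↦ hlip j hj θ hθ θ' hθ')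

theorem one_add_mul_self_le_add_two_mul_pow_three {R : Type*} [CommRing R] [LinearOrder R]
    [IsStrictOrderedRing R] {r : R} (hr : 1 ≤ r) : (1 + r) * r ≤ r + 2 * r ^ 3 := by
  have hpow : r ^ 2 ≤ r ^ 3 := pow_le_pow_right₀ hr (Nat.le_succ 2)
  linarith [sq_nonneg r]

theorem one_div_mul_one_add_div_mul_le {𝕜 : Type*} [Field 𝕜] [LinearOrder 𝕜]
    [IsStrictOrderedRing 𝕜] {a b n M d : 𝕜} (ha : 0 < a) (hab : a ≤ b) (hn : 0 ≤ n)
    (hM : 0 ≤ M) (hd : 0 ≤ d) :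
    1 / n * (1 + b / a) * (b * M / a) * d ≤
      1 / n * (b / a) * M * d + 2 / n * (b / a) ^ 3 * M * d := by
  calc
    _ = 1 / n * ((1 + b / a) * (b / a)) * M * d := by ring
    _ ≤ 1 / n * (b / a + 2 * (b / a) ^ 3) * M * d := by
      gcongr
      exact one_add_mul_self_le_add_two_mul_pow_three ((one_le_div ha).2 hab)
    _ = _ := by ring

/-- Lipschitz continuity of the self-normalized importance weights of the IWAE. -/
theorem stmt_7
    {E : Type*} [NormedAddCommGroup E] [NormedSpace ℝ E]
    {K : ℕ} (hK : 1 ≤ K) (Θ : Set E)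
    (w : Fin K → E → ℝ) (αm αp M : ℝ)
    (hαm : 0 < αm) (hαmp : αm ≤ αp) (hM : 0 ≤ M)
    (hbound : ∀ ℓ, ∀ θ ∈ Θ, αm ≤ w ℓ θ ∧ w ℓ θ ≤ αp)
    (hlip : ∀ ℓ, ∀ θ ∈ Θ, ∀ θ' ∈ Θ, |w ℓ θ - w ℓ θ'| ≤ αp * M * ‖θ - θ'‖) :
    ∀ ℓ, ∀ θ ∈ Θ, ∀ θ' ∈ Θ,
      |w ℓ θ / (∑ j, w j θ) - w ℓ θ' / (∑ j, w j θ')| ≤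
        (1 / K) * (αp / αm) * M * ‖θ - θ'‖ +
          (2 / K) * (αp / αm) ^ 3 * M * ‖θ - θ'‖ := by
  intro ℓ θ hθ θ' hθ'
  have hsharp := stmt_7_general hαm (mem_univ ℓ) (fun j _ θ hθ ↦ (hbound j θ hθ).1)
    (fun θ hθ ↦ (hbound ℓ θ hθ).2) (by simpa only [dist_eq_norm] using fun j _ ↦ hlip j) θ hθ θ' hθ'
  rw [card_fin, dist_eq_norm] at hsharp
  exact hsharp.trans
    (one_div_mul_one_add_div_mul_le hαm hαmp K.cast_nonneg hM (norm_nonneg _))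
end

section
/- Let N ≥ 1 and let G : ℝ^{d₀} → ℝ^{d_N} be an N-layer feedforward network G(z) = f_N(W_N f_{N−1}(⋯ f_1(W_1 z + b_1) ⋯) + b_N), where W_i ∈ ℝ^{d_i × d_{i−1}}, b_i ∈ ℝ^{d_i}, and each activation map f_i : ℝ^{d_i} → ℝ^{d_i} is differentiable with sup_u ‖Df_i(u)‖ ≤ M_i and with u ↦ Df_i(u) Lipschitz with constant L_i (operator norms). Assume ‖W_i‖ ≤ a (spectral norm) for all i. Then G is differentiable, for all z ∈ ℝ^{d₀}: ‖DG(z)‖ ≤ a^N ∏_{j=1}^{N} M_j, and for all z, z' ∈ ℝ^{d₀}: ‖DG(z) − DG(z')‖ ≤ ( ∑_{k=1}^{N} L_k a^{N+k} ∏_{j=1}^{k−1} M_j² ∏_{j=k+1}^{N} M_j ) ‖z − z'‖. -/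
open Finset

/-- The `k`-layer feedforward network: `net d W b f k` applies the layers
`z ↦ f i (W i z + b i)` for `i = 0, …, k − 1` in order. -/
noncomputable def net (d : ℕ → ℕ)
    (W : ∀ k, EuclideanSpace ℝ (Fin (d k)) →L[ℝ] EuclideanSpace ℝ (Fin (d (k + 1))))
    (b : ∀ k, EuclideanSpace ℝ (Fin (d (k + 1))))
    (f : ∀ k, EuclideanSpace ℝ (Fin (d (k + 1))) → EuclideanSpace ℝ (Fin (d (k + 1)))) :
    ∀ k, EuclideanSpace ℝ (Fin (d 0)) → EuclideanSpace ℝ (Fin (d k))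
  | 0 => id
  | k + 1 => fun z => f k (W k (net d W b f k z) + b k)

/-! Differentiable maps with `‖Df‖ ≤ C` and `Df` `K`-Lipschitz are closed under composition: from
`D(g ∘ f)(x) = Dg(f x) ∘ Df(x)` the constants `(C_g, K_g)` and `(C_f, K_f)` combine to
`(C_g C_f, K_g C_f² + C_g K_f)`, one factor `C_f` bounding `Df` and the other being the Lipschitz
constant of `f`. A layer `x ↦ f (W x + b)` has constants `(M a, L a²)`, and unrolling the recursion
over the layers gives the product and the sum in the bounds. -/

open scoped NNReal

theorem norm_clm_comp_sub_clm_comp_le {𝕜 E F G : Type*} [NontriviallyNormedField 𝕜]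
    [SeminormedAddCommGroup E] [NormedSpace 𝕜 E] [SeminormedAddCommGroup F] [NormedSpace 𝕜 F]
    [SeminormedAddCommGroup G] [NormedSpace 𝕜 G]
    (B B' : F →L[𝕜] G) (A A' : E →L[𝕜] F) :
    ‖B.comp A - B'.comp A'‖ ≤ ‖B - B'‖ * ‖A‖ + ‖B'‖ * ‖A - A'‖ :=
  calc ‖B.comp A - B'.comp A'‖ = ‖(B - B').comp A + B'.comp (A - A')‖ := by
        rw [ContinuousLinearMap.sub_comp, ContinuousLinearMap.comp_sub, sub_add_sub_cancel]
    _ ≤ ‖(B - B').comp A‖ + ‖B'.comp (A - A')‖ := norm_add_le _ _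
    _ ≤ ‖B - B'‖ * ‖A‖ + ‖B'‖ * ‖A - A'‖ := by
        gcongr <;> exact ContinuousLinearMap.opNorm_comp_le _ _

section BoundedLipschitzFDeriv

variable {𝕜 E F : Type*} [NontriviallyNormedField 𝕜] [NormedAddCommGroup E] [NormedSpace 𝕜 E]
  [NormedAddCommGroup F] [NormedSpace 𝕜 F]

variable (𝕜) in
/-- The map `f` is differentiable, with derivative bounded by `C` in operator norm and
`K`-Lipschitz. The constants live in `ℝ≥0`, as for `LipschitzWith`. -/
structure HasBoundedLipschitzFDeriv (C K : ℝ≥0) (f : E → F) : Prop where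
  differentiable : Differentiable 𝕜 f
  nnnorm_fderiv_le : ∀ x, ‖fderiv 𝕜 f x‖₊ ≤ C
  lipschitzWith_fderiv : LipschitzWith K (fderiv 𝕜 f)

namespace HasBoundedLipschitzFDeriv

variable {C K : ℝ≥0} {f : E → F}

theorem iff_norm_le : HasBoundedLipschitzFDeriv 𝕜 C K f ↔
    Differentiable 𝕜 f ∧ (∀ x, ‖fderiv 𝕜 f x‖ ≤ C) ∧
      ∀ x y, ‖fderiv 𝕜 f x - fderiv 𝕜 f y‖ ≤ K * ‖x - y‖ := by
  simp only [← dist_eq_norm, ← lipschitzWith_iff_dist_le_mul]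
  exact ⟨fun h => ⟨h.1, h.2, h.3⟩, fun h => ⟨h.1, h.2.1, h.2.2⟩⟩

theorem clm_add_const {A : E →L[𝕜] F} (hA : ‖A‖₊ ≤ C) (b : F) :
    HasBoundedLipschitzFDeriv 𝕜 C 0 (fun x => A x + b) := by
  have hderiv : fderiv 𝕜 (fun x => A x + b) = fun _ => A :=
    funext fun x => (A.hasFDerivAt.add_const b).fderiv
  exact
    { differentiable := A.differentiable.add_const b
      nnnorm_fderiv_le := fun _ => by rwa [hderiv]
      lipschitzWith_fderiv := hderiv ▸ LipschitzWith.const A }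

protected theorem id : HasBoundedLipschitzFDeriv 𝕜 1 0 (id : E → E) := by
  have haffine := clm_add_const (C := 1) (A := .id 𝕜 E) ContinuousLinearMap.norm_id_le 0
  simpa only [ContinuousLinearMap.id_apply, add_zero] using! haffine

end HasBoundedLipschitzFDeriv

end BoundedLipschitzFDeriv

namespace HasBoundedLipschitzFDeriv

variable {𝕜 E F G : Type*} [RCLike 𝕜] [NormedAddCommGroup E] [NormedSpace 𝕜 E]
  [NormedAddCommGroup F] [NormedSpace 𝕜 F] [NormedAddCommGroup G] [NormedSpace 𝕜 G]
  {C K C' K' : ℝ≥0} {f : E → F} {g : F → G}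

protected theorem lipschitzWith (hf : HasBoundedLipschitzFDeriv 𝕜 C K f) : LipschitzWith C f :=
  lipschitzWith_of_nnnorm_fderiv_le hf.differentiable hf.nnnorm_fderiv_le

theorem comp (hg : HasBoundedLipschitzFDeriv 𝕜 C' K' g) (hf : HasBoundedLipschitzFDeriv 𝕜 C K f) :
    HasBoundedLipschitzFDeriv 𝕜 (C' * C) (K' * C ^ 2 + C' * K) (g ∘ f) := by
  obtain ⟨-, hg_norm, hg_lip⟩ := iff_norm_le.1 hg
  obtain ⟨-, hf_norm, hf_lip⟩ := iff_norm_le.1 hf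
  have hchain (x : E) : fderiv 𝕜 (g ∘ f) x = (fderiv 𝕜 g (f x)).comp (fderiv 𝕜 f x) :=
    fderiv_comp x (hg.differentiable _) (hf.differentiable x)
  refine iff_norm_le.2 ⟨hg.differentiable.comp hf.differentiable, fun x => ?_, fun x y => ?_⟩
  · rw [hchain]
    exact (ContinuousLinearMap.opNorm_comp_le _ _).trans
      (mul_le_mul (hg_norm _) (hf_norm x) (norm_nonneg _) C'.2)
  · have hg_comp : ‖fderiv 𝕜 g (f x) - fderiv 𝕜 g (f y)‖ ≤ K' * (C * ‖x - y‖) :=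
      (hg_lip _ _).trans (by gcongr; exact hf.lipschitzWith.norm_sub_le x y)
    calc ‖fderiv 𝕜 (g ∘ f) x - fderiv 𝕜 (g ∘ f) y‖
        ≤ ‖fderiv 𝕜 g (f x) - fderiv 𝕜 g (f y)‖ * ‖fderiv 𝕜 f x‖ +
            ‖fderiv 𝕜 g (f y)‖ * ‖fderiv 𝕜 f x - fderiv 𝕜 f y‖ := by
          rw [hchain, hchain]
          exact norm_clm_comp_sub_clm_comp_le _ _ _ _
      _ ≤ K' * (C * ‖x - y‖) * C + C' * (K * ‖x - y‖) := by
          gcongr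
          exacts [hf_norm x, hg_norm _, hf_lip x y]
      _ = ↑(K' * C ^ 2 + C' * K) * ‖x - y‖ := by
          push_cast
          ring

end HasBoundedLipschitzFDeriv

section Layers

/-- The composition `g (n - 1) ∘ ⋯ ∘ g 0` of the first `n` maps of a sequence, each taking the
values of the previous one; for layers `g k = fun x => f k (W k x + b k)` this is a feedforward
network on arbitrary spaces. -/
def composeLayers {E : ℕ → Type*} (g : ∀ k, E k → E (k + 1)) : ∀ n, E 0 → E n
  | 0 => id
  | n + 1 => g n ∘ composeLayers g n

theorem net_eq_composeLayers (d : ℕ → ℕ)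
    (W : ∀ k, EuclideanSpace ℝ (Fin (d k)) →L[ℝ] EuclideanSpace ℝ (Fin (d (k + 1))))
    (b : ∀ k, EuclideanSpace ℝ (Fin (d (k + 1))))
    (f : ∀ k, EuclideanSpace ℝ (Fin (d (k + 1))) → EuclideanSpace ℝ (Fin (d (k + 1)))) (n : ℕ) :
    net d W b f n =
      composeLayers (E := fun k => EuclideanSpace ℝ (Fin (d k)))
        (fun k x => f k (W k x + b k)) n := by
  induction n with
  | zero => rfl
  | succ n ih => rw [net, ih]; rfl

variable {𝕜 : Type*} [RCLike 𝕜] {E : ℕ → Type*} [∀ k, NormedAddCommGroup (E k)]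
  [∀ k, NormedSpace 𝕜 (E k)]

protected theorem HasBoundedLipschitzFDeriv.composeLayers {g : ∀ k, E k → E (k + 1)}
    {C K : ℕ → ℝ≥0} (hg : ∀ k, HasBoundedLipschitzFDeriv 𝕜 (C k) (K k) (g k)) (n : ℕ) :
    HasBoundedLipschitzFDeriv 𝕜 (∏ j ∈ range n, C j)
      (∑ k ∈ range n, K k * (∏ j ∈ range k, C j ^ 2) * ∏ j ∈ Ico (k + 1) n, C j)
      (composeLayers g n) := by
  induction n with
  | zero => exact .id
  | succ n ih =>
    have hsum : ∑ k ∈ range (n + 1),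
          K k * (∏ j ∈ range k, C j ^ 2) * ∏ j ∈ Ico (k + 1) (n + 1), C j =
        K n * (∏ j ∈ range n, C j) ^ 2 +
          C n * ∑ k ∈ range n, K k * (∏ j ∈ range k, C j ^ 2) * ∏ j ∈ Ico (k + 1) n, C j := by
      rw [sum_range_succ, Ico_self, prod_empty, mul_one, prod_pow, add_comm, mul_sum]
      congr 1
      refine sum_congr rfl fun k hk => ?_
      rw [prod_Ico_succ_top (mem_range.1 hk)]
      ring
    rw [prod_range_succ_comm, hsum]
    exact (hg n).comp ih

theorem stmt_9_general (N : ℕ) {W : ∀ k, E k →L[𝕜] E (k + 1)} (b : ∀ k, E (k + 1))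
    {f : ∀ k, E (k + 1) → E (k + 1)} {a : ℝ≥0} {M L : ℕ → ℝ≥0} (hW : ∀ k, ‖W k‖₊ ≤ a)
    (hf : ∀ k, HasBoundedLipschitzFDeriv 𝕜 (M k) (L k) (f k)) :
    HasBoundedLipschitzFDeriv 𝕜 (a ^ N * ∏ j ∈ range N, M j)
      (∑ k ∈ range N, L k * a ^ (N + k + 1) * (∏ j ∈ range k, M j ^ 2) *
        ∏ j ∈ Ico (k + 1) N, M j)
      (composeLayers (fun k x => f k (W k x + b k)) N) := by
  have hlayer (k : ℕ) :
      HasBoundedLipschitzFDeriv 𝕜 (a * M k) (L k * a ^ 2) (fun x => f k (W k x + b k)) := by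
    have hcomp := (hf k).comp (.clm_add_const (hW k) (b k))
    rwa [mul_comm, mul_zero, add_zero] at hcomp
  convert HasBoundedLipschitzFDeriv.composeLayers hlayer N using 1
  · rw [prod_mul_distrib, prod_const, card_range]
  · refine sum_congr rfl fun k hk => ?_
    obtain ⟨m, rfl⟩ := Nat.exists_eq_add_of_lt (mem_range.1 hk)
    simp only [mul_pow, prod_mul_distrib, prod_const, card_range, Nat.card_Ico]
    rw [show k + m + 1 - (k + 1) = m by omega]
    ring

end Layers

/-- Boundedness and Lipschitz continuity of the input-derivative of an `N`-layer
feedforward network with weight norms at most `a` and activations with bounded,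
Lipschitz derivatives. -/
theorem stmt_9 (N : ℕ) (hN : 1 ≤ N) (d : ℕ → ℕ)
    (W : ∀ k, EuclideanSpace ℝ (Fin (d k)) →L[ℝ] EuclideanSpace ℝ (Fin (d (k + 1))))
    (b : ∀ k, EuclideanSpace ℝ (Fin (d (k + 1))))
    (f : ∀ k, EuclideanSpace ℝ (Fin (d (k + 1))) → EuclideanSpace ℝ (Fin (d (k + 1))))
    (a : ℝ) (M L : ℕ → ℝ)
    (ha : 0 ≤ a) (hM : ∀ k, 0 ≤ M k) (hL : ∀ k, 0 ≤ L k)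
    (hW : ∀ k, ‖W k‖ ≤ a)
    (hf : ∀ k, Differentiable ℝ (f k))
    (hDf : ∀ k u, ‖fderiv ℝ (f k) u‖ ≤ M k)
    (hDfLip : ∀ k u u', ‖fderiv ℝ (f k) u - fderiv ℝ (f k) u'‖ ≤ L k * ‖u - u'‖) :
    Differentiable ℝ (net d W b f N) ∧
      (∀ z, ‖fderiv ℝ (net d W b f N) z‖ ≤ a ^ N * ∏ j ∈ Finset.range N, M j) ∧
      (∀ z z', ‖fderiv ℝ (net d W b f N) z - fderiv ℝ (net d W b f N) z'‖ ≤
        (∑ k ∈ Finset.range N, L k * a ^ (N + k + 1) *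
          (∏ j ∈ Finset.range k, M j ^ 2) * ∏ j ∈ Finset.Ico (k + 1) N, M j) *
          ‖z - z'‖) := by
  lift a to ℝ≥0 using ha
  lift M to ℕ → ℝ≥0 using hM
  lift L to ℕ → ℝ≥0 using hL
  rw [net_eq_composeLayers]
  simpa using HasBoundedLipschitzFDeriv.iff_norm_le.1 <| stmt_9_general N b hW fun k =>
    HasBoundedLipschitzFDeriv.iff_norm_le.2 ⟨hf k, hDf k, hDfLip k⟩
end

section
/- Let N ≥ 1 and consider the N-layer feedforward network, viewed as a function of its first-layer weight matrix W₁ with all other parameters fixed: G_{W₁}(z) = f_N(W_N f_{N−1}(⋯ f_1(W_1 z + b_1) ⋯) + b_N), where W_i ∈ ℝ^{d_i × d_{i−1}}, b_i ∈ ℝ^{d_i}, and each activation map f_i : ℝ^{d_i} → ℝ^{d_i} is differentiable with sup_u ‖Df_i(u)‖ ≤ M_i and with u ↦ Df_i(u) Lipschitz with constant L_i (operator norms). Assume ‖W_i‖ ≤ a (spectral norm) for all i, and restrict W₁ to matrices with ‖W₁‖ ≤ a. Fix z ∈ ℝ^{d₀}. Then the map W₁ ↦ G_{W₁}(z) is differentiable,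 its derivative satisfies ‖∇_{W₁} G_{W₁}(z)‖ ≤ ‖z‖ a^{N−1} ∏_{j=1}^{N} M_j, and for all admissible W₁, W₁': ‖∇_{W₁} G_{W₁}(z) − ∇_{W₁} G_{W₁'}(z)‖ ≤ ‖z‖² ( ∑_{k=1}^{N} L_k a^{N−2+k} ∏_{j=1}^{k−1} M_j² ∏_{j=k+1}^{N} M_j ) ‖W₁ − W₁'‖. -/
open Finset

/-!
If `f` and `g` have derivatives bounded by `M`, `B` and Lipschitz with constants `L`, `C`, then the
chain rule `D(f ∘ g) = (Df ∘ g) Dg` gives the constants `M B` and `M C + L B²` for `f ∘ g`. Iterated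
over the layers, `L_k` enters at layer `k`, multiplied by the squared derivative bound of the layers
before it and by the derivative bound of the layers after it. The first layer is no exception: in
the variable `V`, the map `V ↦ V z` is a continuous linear map of norm at most `‖z‖`.
-/

section C11Bounds

open scoped NNReal

variable {𝕜 : Type*} [NontriviallyNormedField 𝕜]

section Calculus

variable {E F G : Type*}
  [NormedAddCommGroup E] [NormedSpace 𝕜 E]
  [NormedAddCommGroup F] [NormedSpace 𝕜 F]
  [NormedAddCommGroup G] [NormedSpace 𝕜 G]

variable (𝕜) in
/-- `HasC11Bounds 𝕜 g B C` is quantitative `C^{1,1}` regularity: `g` is differentiable, its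
derivative has operator norm at most `B` everywhere, and the derivative is `C`-Lipschitz for the
operator norm. -/
structure HasC11Bounds (g : E → F) (B C : ℝ≥0) : Prop where
  differentiable : Differentiable 𝕜 g
  nnnorm_fderiv_le (x : E) : ‖fderiv 𝕜 g x‖₊ ≤ B
  lipschitzWith_fderiv : LipschitzWith C (fderiv 𝕜 g)

lemma nnnorm_continuousLinearMap_apply_le (z : E) : ‖ContinuousLinearMap.apply 𝕜 F z‖₊ ≤ ‖z‖₊ :=
  ContinuousLinearMap.opNNNorm_le_bound _ _ fun V ↦ (V.le_opNNNorm z).trans_eq (mul_comm _ _)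

lemma lipschitzWith_clm_comp_of_nnnorm_le {X : Type*} [PseudoMetricSpace X]
    {S : X → F →L[𝕜] G} {T : X → E →L[𝕜] F} {M L B C : ℝ≥0}
    (hS : ∀ x, ‖S x‖₊ ≤ M) (hS_lip : LipschitzWith L S)
    (hT : ∀ x, ‖T x‖₊ ≤ B) (hT_lip : LipschitzWith C T) :
    LipschitzWith (M * C + L * B) fun x ↦ (S x).comp (T x) := by
  refine LipschitzWith.of_dist_le_mul fun x y ↦ ?_
  have hsplit : (S x).comp (T x) - (S y).comp (T y) =
      (S x).comp (T x - T y) + (S x - S y).comp (T y) := by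
    rw [ContinuousLinearMap.comp_sub, ContinuousLinearMap.sub_comp, sub_add_sub_cancel]
  calc dist ((S x).comp (T x)) ((S y).comp (T y))
      ≤ ‖(S x).comp (T x - T y)‖ + ‖(S x - S y).comp (T y)‖ := by
        rw [dist_eq_norm, hsplit]
        exact norm_add_le _ _
    _ ≤ ‖S x‖ * ‖T x - T y‖ + ‖S x - S y‖ * ‖T y‖ := by
        gcongr <;> exact ContinuousLinearMap.opNorm_comp_le _ _
    _ ≤ M * (C * dist x y) + L * dist x y * B := by
        rw [← dist_eq_norm, ← dist_eq_norm]
        gcongr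
        exacts [hS x, hT_lip.dist_le_mul x y, hS_lip.dist_le_mul x y, hT y]
    _ = ↑(M * C + L * B) * dist x y := by
        push_cast
        ring

namespace HasC11Bounds

protected lemma id : HasC11Bounds 𝕜 (id : E → E) 1 0 where
  differentiable := differentiable_id
  nnnorm_fderiv_le x := by
    rw [fderiv_id]
    exact ContinuousLinearMap.norm_id_le
  lipschitzWith_fderiv := by
    simpa only [funext fun x : E ↦ fderiv_id (𝕜 := 𝕜) (x := x)] using LipschitzWith.const _

lemma clm_add_const (A : E →L[𝕜] F) (b : F) :
    HasC11Bounds 𝕜 (fun x ↦ A x + b) ‖A‖₊ 0 := by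
  have hderiv : fderiv 𝕜 (fun x ↦ A x + b) = fun _ ↦ A :=
    funext fun x ↦ (A.hasFDerivAt.add_const b).fderiv
  exact ⟨A.differentiable.add_const b, fun x ↦ by rw [hderiv], hderiv ▸ LipschitzWith.const A⟩

lemma mono {g : E → F} {B B' C C' : ℝ≥0} (hg : HasC11Bounds 𝕜 g B C)
    (hB : B ≤ B') (hC : C ≤ C') : HasC11Bounds 𝕜 g B' C' :=
  ⟨hg.differentiable, fun x ↦ (hg.nnnorm_fderiv_le x).trans hB, hg.lipschitzWith_fderiv.weaken hC⟩

variable [IsRCLikeNormedField 𝕜]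

protected lemma comp {f : F → G} {g : E → F} {M L B C : ℝ≥0}
    (hf : HasC11Bounds 𝕜 f M L) (hg : HasC11Bounds 𝕜 g B C) :
    HasC11Bounds 𝕜 (f ∘ g) (M * B) (M * C + L * B ^ 2) := by
  have hderiv : fderiv 𝕜 (f ∘ g) = fun x ↦ (fderiv 𝕜 f (g x)).comp (fderiv 𝕜 g x) :=
    funext fun x ↦ fderiv_comp x (hf.differentiable _) (hg.differentiable x)
  have hg_lip : LipschitzWith B g :=
    lipschitzWith_of_nnnorm_fderiv_le hg.differentiable hg.nnnorm_fderiv_le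
  refine ⟨hf.differentiable.comp hg.differentiable, fun x ↦ ?_, ?_⟩
  · rw [hderiv]
    exact (ContinuousLinearMap.opNNNorm_comp_le _ _).trans
      (mul_le_mul' (hf.nnnorm_fderiv_le _) (hg.nnnorm_fderiv_le x))
  · rw [hderiv, sq, ← mul_assoc]
    exact lipschitzWith_clm_comp_of_nnnorm_le (fun x ↦ hf.nnnorm_fderiv_le (g x))
      (hf.lipschitzWith_fderiv.comp hg_lip) hg.nnnorm_fderiv_le hg.lipschitzWith_fderiv

lemma comp_clm_add_const {f : F → G} {M L a : ℝ≥0} (hf : HasC11Bounds 𝕜 f M L)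
    {A : E →L[𝕜] F} (hA : ‖A‖₊ ≤ a) (b : F) :
    HasC11Bounds 𝕜 (fun x ↦ f (A x + b)) (M * a) (L * a ^ 2) := by
  simpa only [mul_zero, zero_add] using! hf.comp ((clm_add_const A b).mono hA le_rfl)

end HasC11Bounds

end Calculus

section Feedforward

variable {E : ℕ → Type*} [∀ k, NormedAddCommGroup (E k)] [∀ k, NormedSpace 𝕜 (E k)]

/-- The feedforward network with `n` layers `x ↦ f k (W k x + b k)`, `k = 0, …, n - 1`, between
arbitrary normed spaces; `net` is the case of Euclidean spaces. -/
def feedforward (W : ∀ k, E k →L[𝕜] E (k + 1)) (b : ∀ k, E (k + 1))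
    (f : ∀ k, E (k + 1) → E (k + 1)) : ∀ n, E 0 → E n
  | 0 => id
  | n + 1 => fun x ↦ f n (W n (feedforward W b f n x) + b n)

lemma net_eq_feedforward (d : ℕ → ℕ)
    (W : ∀ k, EuclideanSpace ℝ (Fin (d k)) →L[ℝ] EuclideanSpace ℝ (Fin (d (k + 1))))
    (b : ∀ k, EuclideanSpace ℝ (Fin (d (k + 1))))
    (f : ∀ k, EuclideanSpace ℝ (Fin (d (k + 1))) → EuclideanSpace ℝ (Fin (d (k + 1)))) (n : ℕ) :
    net d W b f n = feedforward W b f n := by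
  induction n with
  | zero => rfl
  | succ n ih => rw [net, feedforward, ih]

/-- The Lipschitz constant of the derivative of an `n`-layer network whose weights have norm at most
`a` and whose activations satisfy `HasC11Bounds 𝕜 (f k) (M k) (L k)`. With layers counted from `0`,
the `k`-th summand accounts for the variation of the derivative of `f k`. -/
def feedforwardLip (a : ℝ≥0) (M L : ℕ → ℝ≥0) (n : ℕ) : ℝ≥0 :=
  ∑ k ∈ range n, L k * a ^ (n + k + 1) * (∏ j ∈ range k, M j ^ 2) * ∏ j ∈ Ico (k + 1) n, M j

lemma feedforwardLip_succ (a : ℝ≥0) (M L : ℕ → ℝ≥0) (n : ℕ) :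
    feedforwardLip a M L (n + 1) =
      M n * a * feedforwardLip a M L n + L n * a ^ 2 * (a ^ n * ∏ j ∈ range n, M j) ^ 2 := by
  rw [feedforwardLip, sum_range_succ, Ico_self, prod_empty, feedforwardLip, mul_sum, prod_pow]
  congr 1
  · refine sum_congr rfl fun k hk ↦ ?_
    rw [prod_Ico_succ_top (mem_range.1 hk)]
    ring
  · ring

lemma feedforwardLip_comp_first_layer (a r : ℝ≥0) (M L : ℕ → ℝ≥0) (n : ℕ) :
    (a ^ n * ∏ j ∈ range n, M (j + 1)) * (L 0 * r ^ 2) +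
        feedforwardLip a (fun k ↦ M (k + 1)) (fun k ↦ L (k + 1)) n * (M 0 * r) ^ 2 =
      r ^ 2 * ∑ k ∈ range (n + 1), L k * a ^ (n + k) *
        (∏ j ∈ range k, M j ^ 2) * ∏ j ∈ Ico (k + 1) (n + 1), M j := by
  have hshift (k : ℕ) : ∏ j ∈ Ico (k + 1) n, M (j + 1) = ∏ j ∈ Ico (k + 1 + 1) (n + 1), M j :=
    prod_Ico_add' M (k + 1) n 1
  have hfirst : ∏ j ∈ range n, M (j + 1) = ∏ j ∈ Ico (0 + 1) (n + 1), M j := by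
    rw [range_eq_Ico, prod_Ico_add' M 0 n 1]
  rw [sum_range_succ', mul_add, add_comm, feedforwardLip, sum_mul, mul_sum, hfirst]
  congr 1
  · refine sum_congr rfl fun k _ ↦ ?_
    rw [hshift, prod_range_succ']
    ring
  · rw [prod_range_zero]
    ring

variable [IsRCLikeNormedField 𝕜]

lemma hasC11Bounds_feedforward {W : ∀ k, E k →L[𝕜] E (k + 1)} (b : ∀ k, E (k + 1))
    {f : ∀ k, E (k + 1) → E (k + 1)} {a : ℝ≥0} {M L : ℕ → ℝ≥0} (hW : ∀ k, ‖W k‖₊ ≤ a)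
    (hf : ∀ k, HasC11Bounds 𝕜 (f k) (M k) (L k)) (n : ℕ) :
    HasC11Bounds 𝕜 (feedforward W b f n) (a ^ n * ∏ j ∈ range n, M j)
      (feedforwardLip a M L n) := by
  induction n with
  | zero => simpa [feedforwardLip] using! HasC11Bounds.id
  | succ n ih =>
    have hstep := ((hf n).comp_clm_add_const (hW n) (b n)).comp ih
    rw [← feedforwardLip_succ] at hstep
    convert! hstep using 1
    rw [prod_range_succ]
    ring

lemma hasC11Bounds_feedforward_first_weight (n : ℕ)
    {W : ∀ k, E (k + 1) →L[𝕜] E (k + 2)} (b : ∀ k, E (k + 1)) {f : ∀ k, E (k + 1) → E (k + 1)}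
    {a : ℝ≥0} {M L : ℕ → ℝ≥0} (hW : ∀ k, ‖W k‖₊ ≤ a)
    (hf : ∀ k, HasC11Bounds 𝕜 (f k) (M k) (L k)) (z : E 0) :
    HasC11Bounds 𝕜
      (fun V : E 0 →L[𝕜] E 1 ↦ feedforward (E := fun k ↦ E (k + 1)) W (fun k ↦ b (k + 1))
        (fun k ↦ f (k + 1)) n (f 0 (V z + b 0)))
      (‖z‖₊ * a ^ n * ∏ j ∈ range (n + 1), M j)
      (‖z‖₊ ^ 2 * ∑ k ∈ range (n + 1), L k * a ^ (n + k) *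
        (∏ j ∈ range k, M j ^ 2) * ∏ j ∈ Ico (k + 1) (n + 1), M j) := by
  have hfirst : HasC11Bounds 𝕜 (fun V : E 0 →L[𝕜] E 1 ↦ f 0 (V z + b 0))
      (M 0 * ‖z‖₊) (L 0 * ‖z‖₊ ^ 2) :=
    (hf 0).comp_clm_add_const (nnnorm_continuousLinearMap_apply_le z) (b 0)
  have hrest := hasC11Bounds_feedforward (E := fun k ↦ E (k + 1)) (fun k ↦ b (k + 1)) hW
    fun k ↦ hf (k + 1)
  have hcomp := (hrest n).comp hfirst
  rw [feedforwardLip_comp_first_layer] at hcomp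
  convert! hcomp using 1
  rw [prod_range_succ']
  ring

theorem stmt_10_general (n : ℕ) (W : ∀ k, E (k + 1) →L[𝕜] E (k + 2)) (b : ∀ k, E (k + 1))
    (f : ∀ k, E (k + 1) → E (k + 1)) (a : ℝ) (M L : ℕ → ℝ) (hL : ∀ k, 0 ≤ L k)
    (hW : ∀ k, ‖W k‖ ≤ a) (hf : ∀ k, Differentiable 𝕜 (f k))
    (hDf : ∀ k u, ‖fderiv 𝕜 (f k) u‖ ≤ M k)
    (hDfLip : ∀ k u u', ‖fderiv 𝕜 (f k) u - fderiv 𝕜 (f k) u'‖ ≤ L k * ‖u - u'‖)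
    (z : E 0) (Φ : (E 0 →L[𝕜] E 1) → E (n + 1))
    (hΦ : ∀ V, Φ V = feedforward (E := fun k ↦ E (k + 1)) W (fun k ↦ b (k + 1))
      (fun k ↦ f (k + 1)) n (f 0 (V z + b 0))) :
    Differentiable 𝕜 Φ ∧
      (∀ V, ‖fderiv 𝕜 Φ V‖ ≤ ‖z‖ * a ^ n * ∏ j ∈ range (n + 1), M j) ∧
      ∀ V V', ‖fderiv 𝕜 Φ V - fderiv 𝕜 Φ V'‖ ≤
        ‖z‖ ^ 2 * (∑ k ∈ range (n + 1), L k * a ^ (n + k) *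
          (∏ j ∈ range k, M j ^ 2) * ∏ j ∈ Ico (k + 1) (n + 1), M j) * ‖V - V'‖ := by
  obtain rfl : Φ = _ := funext hΦ
  lift a to ℝ≥0 using (norm_nonneg _).trans (hW 0)
  lift M to ℕ → ℝ≥0 using fun k ↦ (norm_nonneg _).trans (hDf k 0)
  lift L to ℕ → ℝ≥0 using hL
  have hfC11 (k : ℕ) : HasC11Bounds 𝕜 (f k) (M k) (L k) :=
    ⟨hf k, hDf k, lipschitzWith_iff_norm_sub_le.2 (hDfLip k)⟩
  have hnet := hasC11Bounds_feedforward_first_weight n b hW hfC11 z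
  beta_reduce
  refine ⟨hnet.differentiable, fun V ↦ ?_, fun V V' ↦ ?_⟩
  · exact_mod_cast hnet.nnnorm_fderiv_le V
  · exact_mod_cast hnet.lipschitzWith_fderiv.norm_sub_le V V'

end Feedforward

end C11Bounds

/-- The `N`-layer network (`N = N' + 1 ≥ 1`) viewed as a function `Φ` of its first-layer
weight `V` (all other parameters fixed): `Φ V` is the result of applying the remaining
layers `2, …, N` to `f 0 (V z + b 0)`.  Its derivative with respect to `V` is bounded by
`‖z‖ a^{N−1} ∏ M_j` and Lipschitz with constant
`‖z‖² ∑_{k=1}^{N} L_k a^{N−2+k} ∏_{j<k} M_j² ∏_{j>k} M_j` on `{V | ‖V‖ ≤ a}`. -/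
theorem stmt_10 (N' : ℕ) (d : ℕ → ℕ)
    (W : ∀ k, EuclideanSpace ℝ (Fin (d k)) →L[ℝ] EuclideanSpace ℝ (Fin (d (k + 1))))
    (b : ∀ k, EuclideanSpace ℝ (Fin (d (k + 1))))
    (f : ∀ k, EuclideanSpace ℝ (Fin (d (k + 1))) → EuclideanSpace ℝ (Fin (d (k + 1))))
    (a : ℝ) (M L : ℕ → ℝ)
    (ha : 0 ≤ a) (hM : ∀ k, 0 ≤ M k) (hL : ∀ k, 0 ≤ L k)
    (hW : ∀ k, ‖W k‖ ≤ a)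
    (hf : ∀ k, Differentiable ℝ (f k))
    (hDf : ∀ k u, ‖fderiv ℝ (f k) u‖ ≤ M k)
    (hDfLip : ∀ k u u', ‖fderiv ℝ (f k) u - fderiv ℝ (f k) u'‖ ≤ L k * ‖u - u'‖)
    (z : EuclideanSpace ℝ (Fin (d 0)))
    (Φ : (EuclideanSpace ℝ (Fin (d 0)) →L[ℝ] EuclideanSpace ℝ (Fin (d 1))) →
      EuclideanSpace ℝ (Fin (d (N' + 1))))
    (hΦ : ∀ V, Φ V =
      net (fun k => d (k + 1)) (fun k => W (k + 1)) (fun k => b (k + 1))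
        (fun k => f (k + 1)) N' (f 0 (V z + b 0))) :
    Differentiable ℝ Φ ∧
      (∀ V, ‖V‖ ≤ a → ‖fderiv ℝ Φ V‖ ≤
        ‖z‖ * a ^ N' * ∏ j ∈ Finset.range (N' + 1), M j) ∧
      (∀ V V', ‖V‖ ≤ a → ‖V'‖ ≤ a →
        ‖fderiv ℝ Φ V - fderiv ℝ Φ V'‖ ≤
          ‖z‖ ^ 2 * (∑ k ∈ Finset.range (N' + 1), L k * a ^ (N' + k) *
            (∏ j ∈ Finset.range k, M j ^ 2) * ∏ j ∈ Finset.Ico (k + 1) (N' + 1), M j) *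
            ‖V - V'‖) := by
  obtain ⟨hdiff, hbound, hlip⟩ := stmt_10_general (E := fun k ↦ EuclideanSpace ℝ (Fin (d k))) N'
    (fun k ↦ W (k + 1)) b f a M L hL (fun k ↦ hW (k + 1)) hf hDf hDfLip z Φ
    fun V ↦ by rw [hΦ, net_eq_feedforward]
  exact ⟨hdiff, fun V _ ↦ hbound V, fun V V' _ _ ↦ hlip V V'⟩
end

section
/- Let s > 0 and s₁ ≤ s₂ be real numbers, and define the generalized soft-clipping function f : ℝ → ℝ by f(x) = (1/s) log( (1 + e^{s(x−s₁)}) / (1 + e^{s(x−s₂)}) ) + s₁. Then: (i) f is monotone nondecreasing; (ii) s₁ ≤ f(x) ≤ s₂ for all x ∈ ℝ; (iii) f is differentiable with f'(x) = σ(s(x−s₁)) − σ(s(x−s₂)) ∈ [0, 1], where σ(t) = 1/(1+e^{−t}), so f is 1-Lipschitz; and (iv) f' is (s/4)-Lipschitz, so f is smooth. -/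
/-! The soft-clipping function is a rescaled difference of two translates of the softplus function
`t ↦ log (1 + eᵗ)`, whose derivative is the sigmoid `σ`. Softplus is nondecreasing and 1-Lipschitz,
which bounds the difference of two of its values. Since `σ' = σ (1 - σ) ≤ 1/4`, the sigmoid is
nondecreasing and 1/4-Lipschitz, and the difference of two nondecreasing functions with a common
Lipschitz constant has that same constant rather than its double. -/

section MonotoneLipschitz

open scoped NNReal

variable {α : Type*} [PseudoMetricSpace α] {K : ℝ≥0} {f g : α → ℝ}

lemma sub_mem_Icc_of_monotone_of_lipschitzWith [Preorder α] (hf : Monotone f)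
    (hfK : LipschitzWith K f) {x y : α} (hxy : x ≤ y) :
    f y - f x ∈ Set.Icc 0 (K * dist y x) :=
  ⟨sub_nonneg.2 (hf hxy), (le_abs_self _).trans (hfK.dist_le_mul y x)⟩

lemma lipschitzWith_sub_of_monotone [LinearOrder α] (hf : Monotone f) (hg : Monotone g)
    (hfK : LipschitzWith K f) (hgK : LipschitzWith K g) :
    LipschitzWith K fun x => f x - g x := by
  refine LipschitzWith.of_dist_le_mul fun x y => ?_
  wlog hyx : y ≤ x generalizing x y
  · simpa only [dist_comm] using this y x (le_of_not_ge hyx)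
  obtain ⟨hf_nonneg, hf_le⟩ := sub_mem_Icc_of_monotone_of_lipschitzWith hf hfK hyx
  obtain ⟨hg_nonneg, hg_le⟩ := sub_mem_Icc_of_monotone_of_lipschitzWith hg hgK hyx
  rw [Real.dist_eq, sub_sub_sub_comm]
  exact abs_sub_le_of_nonneg_of_le hf_nonneg hf_le hg_nonneg hg_le

end MonotoneLipschitz

section Sigmoid

open Real

lemma lipschitzWith_sigmoid : LipschitzWith 4⁻¹ sigmoid := by
  refine lipschitzWith_of_nnnorm_deriv_le differentiable_sigmoid fun t => ?_
  have h_nonneg : 0 ≤ sigmoid t * (1 - sigmoid t) :=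
    mul_nonneg (sigmoid_nonneg t) (sub_nonneg.2 (sigmoid_le_one t))
  have h_le : sigmoid t * (1 - sigmoid t) ≤ 4⁻¹ := by
    linarith [sq_nonneg (sigmoid t - 1 / 2)]
  rw [deriv_sigmoid, ← NNReal.coe_le_coe, coe_nnnorm, norm_of_nonneg h_nonneg]
  exact_mod_cast h_le

lemma abs_sigmoid_sub_sigmoid_le_one (u v : ℝ) : |sigmoid u - sigmoid v| ≤ 1 :=
  abs_sub_le_of_nonneg_of_le (sigmoid_nonneg u) (sigmoid_le_one u)
    (sigmoid_nonneg v) (sigmoid_le_one v)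

lemma sigmoid_sub_sigmoid_mem_Icc {u v : ℝ} (h : v ≤ u) :
    sigmoid u - sigmoid v ∈ Set.Icc 0 1 :=
  ⟨sub_nonneg.2 (sigmoid_le h), (le_abs_self _).trans (abs_sigmoid_sub_sigmoid_le_one u v)⟩

lemma lipschitzWith_sigmoid_sub_sigmoid_add (d : ℝ) :
    LipschitzWith 4⁻¹ fun t => sigmoid t - sigmoid (t + d) := by
  have h_shift : LipschitzWith 4⁻¹ fun t => sigmoid (t + d) := by
    simpa only [mul_one, Function.comp_def] using
      lipschitzWith_sigmoid.comp (isometry_add_right d).lipschitz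
  exact lipschitzWith_sub_of_monotone sigmoid_monotone
    (sigmoid_monotone.comp (add_left_mono (a := d))) lipschitzWith_sigmoid h_shift

end Sigmoid

section Softplus

open Real

/-- The softplus function, the antiderivative of the sigmoid that vanishes at `-∞`; a difference of
two of its rescaled translates is the soft-clipping function. -/
noncomputable def softplus (t : ℝ) : ℝ := log (1 + exp t)

lemma hasDerivAt_softplus (t : ℝ) : HasDerivAt softplus (sigmoid t) t := by
  have h_pos : 0 < 1 + exp t := by positivity
  refine (((hasDerivAt_exp t).const_add 1).log h_pos.ne').congr_deriv ?_
  rw [sigmoid_def, exp_neg]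
  field_simp
  ring

lemma monotone_softplus : Monotone softplus :=
  monotone_of_hasDerivAt_nonneg hasDerivAt_softplus sigmoid_nonneg

lemma lipschitzWith_softplus : LipschitzWith 1 softplus := by
  refine lipschitzWith_of_nnnorm_deriv_le
    (fun t => (hasDerivAt_softplus t).differentiableAt) fun t => ?_
  rw [(hasDerivAt_softplus t).deriv, ← NNReal.coe_le_coe, coe_nnnorm,
    norm_of_nonneg (sigmoid_nonneg t)]
  exact sigmoid_le_one t

end Softplus

section SoftClip

open Real

/-- The generalized soft-clipping function with sharpness `s` and clipping levels `a` and `b`;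
at `s = 0` it takes the junk value `a`. -/
noncomputable def softClip (s a b x : ℝ) : ℝ :=
  (1 / s) * log ((1 + exp (s * (x - a))) / (1 + exp (s * (x - b)))) + a

variable {s a b : ℝ}

lemma softClip_eq_softplus_sub (s a b x : ℝ) :
    softClip s a b x = (softplus (s * (x - a)) - softplus (s * (x - b))) / s + a := by
  rw [softClip, log_div (by positivity) (by positivity), one_div_mul_eq_div, softplus, softplus]

lemma softClip_mem_Icc (hs : 0 < s) (hab : a ≤ b) (x : ℝ) : softClip s a b x ∈ Set.Icc a b := by
  have h_arg : s * (x - b) ≤ s * (x - a) := by gcongr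
  obtain ⟨h_nonneg, h_le⟩ :=
    sub_mem_Icc_of_monotone_of_lipschitzWith monotone_softplus lipschitzWith_softplus h_arg
  rw [softClip_eq_softplus_sub]
  refine ⟨le_add_of_nonneg_left (div_nonneg h_nonneg hs.le), ?_⟩
  rw [← le_sub_iff_add_le, div_le_iff₀ hs]
  calc softplus (s * (x - a)) - softplus (s * (x - b))
      ≤ s * (x - a) - s * (x - b) := by
        rwa [NNReal.coe_one, one_mul, dist_eq, abs_of_nonneg (sub_nonneg.2 h_arg)] at h_le
    _ = (b - a) * s := by ring

lemma hasDerivAt_softClip (hs : s ≠ 0) (x : ℝ) :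
    HasDerivAt (softClip s a b) (sigmoid (s * (x - a)) - sigmoid (s * (x - b))) x := by
  have h_branch (c : ℝ) :
      HasDerivAt (fun y => softplus (s * (y - c))) (sigmoid (s * (x - c)) * s) x :=
    (hasDerivAt_softplus _).comp x
      (by simpa only [mul_one, id_eq] using ((hasDerivAt_id x).sub_const c).const_mul s)
  rw [funext (softClip_eq_softplus_sub s a b)]
  refine ((((h_branch a).sub (h_branch b)).div_const s).add_const a).congr_deriv ?_
  rw [← sub_mul, mul_div_cancel_right₀ _ hs]

lemma monotone_softClip (hs : 0 < s) (hab : a ≤ b) : Monotone (softClip s a b) :=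
  monotone_of_hasDerivAt_nonneg (hasDerivAt_softClip hs.ne')
    fun x => (sigmoid_sub_sigmoid_mem_Icc (by gcongr)).1

lemma lipschitzWith_softClip (hs : s ≠ 0) : LipschitzWith 1 (softClip s a b) := by
  refine lipschitzWith_of_nnnorm_deriv_le
    (fun x => (hasDerivAt_softClip hs x).differentiableAt) fun x => ?_
  rw [(hasDerivAt_softClip hs x).deriv]
  exact abs_sigmoid_sub_sigmoid_le_one _ _

lemma lipschitzWith_sigmoid_sub_sigmoid (s a b : ℝ) :
    LipschitzWith (‖s‖₊ / 4) fun x => sigmoid (s * (x - a)) - sigmoid (s * (x - b)) := by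
  have h_shift (x : ℝ) : s * (x - b) = s * (x - a) + s * (a - b) := by ring
  have h_affine : LipschitzWith ‖s‖₊ fun x => s * (x - a) :=
    LipschitzWith.of_dist_le_mul fun x y => by
      rw [dist_eq, ← mul_sub, sub_sub_sub_cancel_right, abs_mul, coe_nnnorm, norm_eq_abs, dist_eq]
  have h_comp := (lipschitzWith_sigmoid_sub_sigmoid_add (s * (a - b))).comp h_affine
  simpa only [Function.comp_def, ← h_shift, inv_mul_eq_div] using h_comp

end SoftClip

/-- The generalized soft-clipping activation function
`f(x) = (1/s) log((1 + e^{s(x−s₁)})/(1 + e^{s(x−s₂)})) + s₁` is nondecreasing, bounded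
between `s₁` and `s₂`, differentiable with derivative `σ(s(x−s₁)) − σ(s(x−s₂)) ∈ [0, 1]`
(hence 1-Lipschitz), and its derivative is `(s/4)`-Lipschitz. -/
theorem stmt_11 (s s₁ s₂ : ℝ) (hs : 0 < s) (h12 : s₁ ≤ s₂)
    (f : ℝ → ℝ)
    (hf : ∀ x, f x = (1 / s) *
      Real.log ((1 + Real.exp (s * (x - s₁))) / (1 + Real.exp (s * (x - s₂)))) + s₁)
    (sig : ℝ → ℝ) (hsig : ∀ t, sig t = 1 / (1 + Real.exp (-t))) :
    Monotone f ∧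
    (∀ x, s₁ ≤ f x ∧ f x ≤ s₂) ∧
    (∀ x, HasDerivAt f (sig (s * (x - s₁)) - sig (s * (x - s₂))) x) ∧
    (∀ x, sig (s * (x - s₁)) - sig (s * (x - s₂)) ∈ Set.Icc (0 : ℝ) 1) ∧
    (∀ x y, |f x - f y| ≤ |x - y|) ∧
    (∀ x y, |(sig (s * (x - s₁)) - sig (s * (x - s₂))) -
        (sig (s * (y - s₁)) - sig (s * (y - s₂)))| ≤ (s / 4) * |x - y|) := by
  obtain rfl : f = softClip s s₁ s₂ := funext hf
  obtain rfl : sig = Real.sigmoid := funext fun t => by rw [hsig, one_div, Real.sigmoid_def]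
  refine ⟨monotone_softClip hs h12, softClip_mem_Icc hs h12, hasDerivAt_softClip hs.ne',
    fun x => sigmoid_sub_sigmoid_mem_Icc (by gcongr), fun x y => ?_, fun x y => ?_⟩
  · simpa only [NNReal.coe_one, one_mul, Real.dist_eq] using
      (lipschitzWith_softClip hs.ne').dist_le_mul x y
  · simpa only [NNReal.coe_div, NNReal.coe_ofNat, coe_nnnorm, Real.norm_of_nonneg hs.le,
      Real.dist_eq] using
      (lipschitzWith_sigmoid_sub_sigmoid s s₁ s₂).dist_le_mul x y
end
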